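/- For all x ∈ (0,∞), the double inequality (x² + 12)/(12x⁴(x+1)²) < [ψ'(x)]² + ψ''(x) < (x² + 4x + 12)/(12x⁴(x+1)²) holds. -/

import Mathlib

/-- The digamma function `ψ(x) = Γ'(x)/Γ(x)`. -/
noncomputable def digamma (x : ℝ) : ℝ := deriv Real.Gamma x / Real.Gamma x

open Filter Topology in
lemma pos_of_telescope (g : ℝ → ℝ) (hg : ∀ y, 0 < y → g (y + 1) < g y)
    (hl : ∀ y, 0 < y → Tendsto (fun n : ℕ => g (y + n)) atTop (𝓝 0)) (y : ℝ) (hy : 0 < y) :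
    0 < g y := by
  have hnn : ∀ z, 0 < z → 0 ≤ g z := by
    intro z hz
    have hanti : Antitone (fun n : ℕ => g (z + n)) := by
      apply antitone_nat_of_succ_le
      intro n
      have := hg (z + n) (by positivity)
      push_cast
      rw [← add_assoc]
      exact this.le
    have := hanti.le_of_tendsto (hl z hz) 0
    simpa using this
  exact lt_of_le_of_lt (hnn (y + 1) (by positivity)) (hg y hy)

noncomputable def pS (x : ℝ) : ℝ := ∑' k : ℕ, 1 / (x + k) ^ 2
noncomputable def qS (x : ℝ) : ℝ := ∑' k : ℕ, -2 / (x + k) ^ 3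

lemma summable_p (x : ℝ) (hx : 0 < x) : Summable (fun k : ℕ => 1 / (x + k) ^ 2) := by
  have h := (Real.summable_one_div_nat_add_rpow x 2).2 (by norm_num)
  refine h.congr fun k => ?_
  rw [abs_of_pos (by positivity), add_comm x]
  norm_num

lemma summable_q' (x : ℝ) (hx : 0 < x) : Summable (fun k : ℕ => 2 / (x + k) ^ 3) := by
  have h := ((Real.summable_one_div_nat_add_rpow x 3).2 (by norm_num)).mul_left 2
  refine h.congr fun k => ?_
  rw [abs_of_pos (by positivity), add_comm x, mul_one_div]
  norm_num

lemma summable_q (x : ℝ) (hx : 0 < x) : Summable (fun k : ℕ => -2 / (x + k) ^ 3) := by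
  refine (summable_q' x hx).neg.congr fun k => ?_
  rw [neg_div]

lemma pS_succ (x : ℝ) (hx : 0 < x) : pS x = 1 / x ^ 2 + pS (x + 1) := by
  unfold pS
  rw [(summable_p x hx).tsum_eq_zero_add]
  congr 1
  · simp
  · refine tsum_congr fun k => ?_
    push_cast; ring_nf

lemma qS_succ (x : ℝ) (hx : 0 < x) : qS x = -2 / x ^ 3 + qS (x + 1) := by
  unfold qS
  rw [(summable_q x hx).tsum_eq_zero_add]
  congr 1
  · simp
  · refine tsum_congr fun k => ?_
    push_cast; ring_nf

open Filter Topology in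
lemma pS_tendsto (x : ℝ) : Tendsto (fun n : ℕ => pS (x + n)) atTop (𝓝 0) := by
  have h := tendsto_sum_nat_add (fun k : ℕ => 1 / (x + k) ^ 2)
  refine h.congr fun n => ?_
  unfold pS
  refine tsum_congr fun k => ?_
  push_cast; ring_nf

open Filter Topology in
lemma qS_tendsto (x : ℝ) : Tendsto (fun n : ℕ => qS (x + n)) atTop (𝓝 0) := by
  have h := tendsto_sum_nat_add (fun k : ℕ => -2 / (x + k) ^ 3)
  refine h.congr fun n => ?_
  unfold qS
  refine tsum_congr fun k => ?_
  push_cast; ring_nf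

lemma pS_hasDerivAt (x : ℝ) (hx : 0 < x) : HasDerivAt pS (qS x) x := by
  unfold pS qS
  refine hasDerivAt_tsum_of_isPreconnected (t := Set.Ioi (x / 2)) (y₀ := x)
    (g := fun (k : ℕ) (x : ℝ) => 1 / (x + k) ^ 2)
    (g' := fun (k : ℕ) (x : ℝ) => -2 / (x + k) ^ 3)
    (u := fun k : ℕ => 2 / (x / 2 + k) ^ 3)
    (summable_q' (x / 2) (by positivity)) isOpen_Ioi isPreconnected_Ioi ?_ ?_
    (Set.mem_Ioi.2 (by linarith)) (summable_p x hx) (Set.mem_Ioi.2 (by linarith))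
  · intro k y hy
    have hy0 : 0 < y := lt_trans (by positivity) (Set.mem_Ioi.1 hy)
    have hne : (y + k) ≠ 0 := by positivity
    have h := ((((hasDerivAt_id y).add_const (k : ℝ)).pow 2).inv (by simpa using hne))
    convert! h using 1
    · ext z; simp
    · simp; field_simp
  · intro k y hy
    have hy1 := Set.mem_Ioi.1 hy
    have hy0 : 0 < y := lt_trans (by positivity) hy1
    rw [neg_div, norm_neg, Real.norm_of_nonneg (by positivity)]
    gcongr

lemma gamma_diff (x : ℝ) (hx : 0 < x) : DifferentiableAt ℝ Real.Gamma x :=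
  Real.differentiableAt_Gamma fun m => by
    have : (0 : ℝ) ≤ m := by positivity
    linarith

lemma digamma_logderiv (x : ℝ) (hx : 0 < x) :
    HasDerivAt (Real.log ∘ Real.Gamma) (digamma x) x := by
  have := (gamma_diff x hx).hasDerivAt.log (Real.Gamma_pos_of_pos hx).ne'
  exact this

lemma digamma_mono : MonotoneOn digamma (Set.Ioi 0) := by
  have h := Real.convexOn_log_Gamma.monotoneOn_deriv
    (fun x hx => (digamma_logderiv x hx).differentiableAt)
  intro a ha b hb hab
  have := h ha hb hab
  rwa [(digamma_logderiv a ha).deriv, (digamma_logderiv b hb).deriv] at this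

lemma digamma_succ (x : ℝ) (hx : 0 < x) : digamma (x + 1) = digamma x + 1 / x := by
  have h1 : HasDerivAt (fun y => (Real.log ∘ Real.Gamma) (y + 1)) (digamma (x + 1)) x :=
    (digamma_logderiv (x + 1) (by positivity)).comp_add_const x 1
  have h2 : HasDerivAt (fun y => (Real.log ∘ Real.Gamma) y + Real.log y) (digamma x + 1 / x) x := by
    rw [one_div]
    exact (digamma_logderiv x hx).add (Real.hasDerivAt_log hx.ne')
  refine h1.unique (h2.congr_of_eventuallyEq ?_)
  filter_upwards [lt_mem_nhds hx] with y hy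
  simp only [Function.comp]
  rw [Real.Gamma_add_one hy.ne', Real.log_mul hy.ne' (Real.Gamma_pos_of_pos hy).ne', add_comm]

lemma digamma_add_nat (x : ℝ) (hx : 0 < x) (n : ℕ) :
    digamma (x + n) = digamma x + ∑ k ∈ Finset.range n, 1 / (x + k) := by
  induction n with
  | zero => simp
  | succ n ih =>
    rw [Finset.sum_range_succ, ← add_assoc, ← ih, Nat.cast_succ, ← add_assoc,
      digamma_succ _ (by positivity)]

open Filter Topology in
lemma digamma_diff_tendsto (x : ℝ) (hx : 0 < x) :
    Tendsto (fun n : ℕ => digamma (x + n) - digamma (1 + n)) atTop (𝓝 0) := by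
  -- digamma changes by at most (m+1)/n over a bounded range
  obtain ⟨m, hm⟩ := exists_nat_ge (x + 1)
  have key : ∀ n : ℕ, 1 ≤ n → ∀ y : ℝ, 0 < y → y ≤ m →
      digamma n ≤ digamma (y + n) ∧ digamma (y + n) ≤ digamma n + m / n := by
    intro n hn y hy hym
    have hn0 : (0 : ℝ) < n := by exact_mod_cast hn
    refine ⟨digamma_mono hn0 (Set.mem_Ioi.2 (by positivity)) (by linarith), ?_⟩
    have h1 : digamma (y + n) ≤ digamma (n + m) :=
      digamma_mono (Set.mem_Ioi.2 (by positivity)) (Set.mem_Ioi.2 (by positivity)) (by linarith)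
    rw [digamma_add_nat _ hn0] at h1
    have h2 : ∑ k ∈ Finset.range m, 1 / ((n : ℝ) + k) ≤ ∑ k ∈ Finset.range m, 1 / (n : ℝ) := by
      apply Finset.sum_le_sum
      intro k _
      apply one_div_le_one_div_of_le hn0
      have : (0 : ℝ) ≤ k := by positivity
      linarith
    simp only [Finset.sum_const, Finset.card_range, nsmul_eq_mul, mul_one_div] at h2
    linarith
  have hz : Tendsto (fun n : ℕ => (m : ℝ) / n) atTop (𝓝 0) := tendsto_const_div_atTop_nhds_zero_nat _
  refine squeeze_zero_norm' ?_ hz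
  filter_upwards [eventually_ge_atTop 1] with n hn
  have a := key n hn x hx (by linarith)
  have b := key n hn 1 one_pos (by linarith)
  rw [Real.norm_eq_abs, abs_le]
  constructor <;> linarith [a.1, a.2, b.1, b.2]

open Filter Topology in
lemma digamma_hasSum (x : ℝ) (hx : 0 < x) :
    Tendsto (fun n : ℕ => ∑ k ∈ Finset.range n, (1 / (1 + k : ℝ) - 1 / (x + k))) atTop
      (𝓝 (digamma x - digamma 1)) := by
  have h := (digamma_diff_tendsto x hx).const_sub (digamma x - digamma 1)
  rw [sub_zero] at h
  refine h.congr fun n => ?_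
  rw [digamma_add_nat x hx, digamma_add_nat 1 one_pos, Finset.sum_sub_distrib]
  ring

lemma digamma_summable (x : ℝ) (hx : 0 < x) :
    Summable (fun k : ℕ => (1 / (1 + k : ℝ) - 1 / (x + k))) := by
  have hs : Summable (fun k : ℕ => |x - 1| * (1 / (min 1 x + k) ^ 2)) :=
    (summable_p _ (lt_min one_pos hx)).mul_left _
  refine Summable.of_norm_bounded hs fun k => ?_
  have hm : 0 < min 1 x := lt_min one_pos hx
  have h1 : min 1 x ≤ 1 := min_le_left _ _
  have h2 : min 1 x ≤ x := min_le_right _ _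
  have : 1 / (1 + k : ℝ) - 1 / (x + k) = (x - 1) * (1 / ((1 + k) * (x + k))) := by
    field_simp; ring
  rw [this, norm_mul, Real.norm_eq_abs, Real.norm_of_nonneg (by positivity)]
  gcongr
  rw [sq]
  gcongr

lemma digamma_eq (x : ℝ) (hx : 0 < x) :
    digamma x = digamma 1 + ∑' k : ℕ, (1 / (1 + k : ℝ) - 1 / (x + k)) := by
  have := tendsto_nhds_unique (digamma_hasSum x hx) (digamma_summable x hx).hasSum.tendsto_sum_nat
  linarith

lemma digamma_hasDerivAt (x : ℝ) (hx : 0 < x) : HasDerivAt digamma (pS x) x := by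
  have h : HasDerivAt (fun x => ∑' k : ℕ, (1 / (1 + k : ℝ) - 1 / (x + k))) (pS x) x := by
    unfold pS
    refine hasDerivAt_tsum_of_isPreconnected (t := Set.Ioi (x / 2)) (y₀ := x)
      (g := fun (k : ℕ) (x : ℝ) => (1 / (1 + k : ℝ) - 1 / (x + k)))
      (g' := fun (k : ℕ) (x : ℝ) => 1 / (x + k) ^ 2)
      (u := fun k : ℕ => 1 / (x / 2 + k) ^ 2)
      (summable_p (x / 2) (by positivity)) isOpen_Ioi isPreconnected_Ioi ?_ ?_
      (Set.mem_Ioi.2 (by linarith)) (digamma_summable x hx) (Set.mem_Ioi.2 (by linarith))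
    · intro k y hy
      have hy0 : 0 < y := lt_trans (by positivity) (Set.mem_Ioi.1 hy)
      have hne : (y + k) ≠ 0 := by positivity
      have h := (((hasDerivAt_id y).add_const (k : ℝ)).inv (by simpa using hne)).const_sub
        (1 / (1 + k : ℝ))
      convert! h using 1
      · ext z; simp
      · simp [neg_div]
    · intro k y hy
      have hy1 := Set.mem_Ioi.1 hy
      have hy0 : 0 < y := lt_trans (by positivity) hy1
      rw [Real.norm_of_nonneg (by positivity)]
      gcongr
  refine (h.const_add (digamma 1)).congr_of_eventuallyEq ?_
  filter_upwards [lt_mem_nhds hx] with y hy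
  exact digamma_eq y hy

lemma deriv_digamma (x : ℝ) (hx : 0 < x) : deriv digamma x = pS x :=
  (digamma_hasDerivAt x hx).deriv

lemma deriv2_digamma (x : ℝ) (hx : 0 < x) : deriv (deriv digamma) x = qS x := by
  refine ((pS_hasDerivAt x hx).congr_of_eventuallyEq ?_).deriv
  filter_upwards [lt_mem_nhds hx] with y hy
  exact deriv_digamma y hy

/-- The rational bound in the statement (`c = 0` or `c = 4`). -/
noncomputable def bF (c y : ℝ) : ℝ := (y ^ 2 + c * y + 12) / (12 * y ^ 4 * (y + 1) ^ 2)

/-- The induced rational bound for the trigamma function. -/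
noncomputable def bR (c y : ℝ) : ℝ :=
  (y ^ 2 + c * y + 12) / (24 * y ^ 2 * (y + 1) ^ 2)
    - y ^ 2 * ((y + 1) ^ 2 + c * (y + 1) + 12) / (24 * (y + 1) ^ 4 * (y + 2) ^ 2)
    + 1 / y + 1 / (2 * y ^ 2)

lemma bR_eq (c y : ℝ) (hy : 0 < y) :
    2 / y ^ 2 * (bR c y - 1 / y - 1 / (2 * y ^ 2)) = bF c y - bF c (y + 1) := by
  unfold bR bF
  rw [show y + 1 + 1 = y + 2 by ring]
  field_simp
  ring

lemma bR_low (y : ℝ) (hy : 0 < y) : bR 0 y - bR 0 (y + 1) < 1 / y ^ 2 := by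
  have : 1 / y ^ 2 - (bR 0 y - bR 0 (y + 1)) =
      (308 + 1016 * y + 1676 * y ^ 2 + 1376 * y ^ 3 + 536 * y ^ 4 + 80 * y ^ 5) /
      (24 * (y + 1) ^ 4 * (y + 2) ^ 4 * (y + 3) ^ 2) := by
    unfold bR
    rw [show y + 1 + 1 = y + 2 by ring, show y + 1 + 2 = y + 3 by ring]
    field_simp
    ring
  have h2 : 0 < 1 / y ^ 2 - (bR 0 y - bR 0 (y + 1)) := by rw [this]; positivity
  linarith

lemma bR_up (y : ℝ) (hy : 0 < y) : 1 / y ^ 2 < bR 4 y - bR 4 (y + 1) := by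
  have : (bR 4 y - bR 4 (y + 1)) - 1 / y ^ 2 =
      (576 + 2244 * y + 3708 * y ^ 2 + 2944 * y ^ 3 + 1116 * y ^ 4 + 164 * y ^ 5) /
      (24 * y * (y + 1) ^ 4 * (y + 2) ^ 4 * (y + 3) ^ 2) := by
    unfold bR
    rw [show y + 1 + 1 = y + 2 by ring, show y + 1 + 2 = y + 3 by ring]
    field_simp
    ring
  have h2 : 0 < (bR 4 y - bR 4 (y + 1)) - 1 / y ^ 2 := by rw [this]; positivity
  linarith

lemma bF_bound (c y : ℝ) (hc : 0 ≤ c) (hc4 : c ≤ 4) (hy : 1 ≤ y) : ‖bF c y‖ ≤ 3 / y := by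
  have hy0 : 0 < y := by linarith
  unfold bF
  rw [Real.norm_of_nonneg (by positivity), div_le_div_iff₀ (by positivity) (by positivity)]
  have h1 : y ^ 2 + c * y + 12 ≤ 17 * y ^ 2 := by nlinarith
  have h2 : (y ^ 2 + c * y + 12) * y ≤ 17 * y ^ 2 * y := by gcongr
  have h3 : y ^ 3 * 1 ≤ y ^ 4 * (y + 1) ^ 2 := by
    have : y ^ 3 ≤ y ^ 4 := pow_le_pow_right₀ hy (by norm_num)
    have h' : 1 ≤ (y + 1) ^ 2 := by nlinarith
    gcongr
  nlinarith

lemma bR_bound (c y : ℝ) (hc : 0 ≤ c) (hc4 : c ≤ 4) (hy : 1 ≤ y) : ‖bR c y‖ ≤ 4 / y := by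
  have hy0 : 0 < y := by linarith
  have h1 : y ^ 2 + c * y + 12 ≤ 17 * y ^ 2 := by nlinarith
  have h1' : (y + 1) ^ 2 + c * (y + 1) + 12 ≤ 17 * (y + 1) ^ 2 := by nlinarith
  have a : (y ^ 2 + c * y + 12) / (24 * y ^ 2 * (y + 1) ^ 2) ≤ 1 / y := by
    calc _ ≤ (17 * y ^ 2) / (24 * y ^ 2 * (y + 1) ^ 2) := by gcongr
      _ = 17 / (24 * (y + 1) ^ 2) := by field_simp
      _ ≤ 1 / y := by
        rw [div_le_div_iff₀ (by positivity) (by positivity)]; nlinarith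
  have b : y ^ 2 * ((y + 1) ^ 2 + c * (y + 1) + 12) / (24 * (y + 1) ^ 4 * (y + 2) ^ 2) ≤ 1 / y := by
    calc _ ≤ ((y + 1) ^ 2 * (17 * (y + 1) ^ 2)) / (24 * (y + 1) ^ 4 * (y + 2) ^ 2) := by
          gcongr; linarith
      _ = 17 / (24 * (y + 2) ^ 2) := by field_simp
      _ ≤ 1 / y := by
        rw [div_le_div_iff₀ (by positivity) (by positivity)]; nlinarith
  have a0 : 0 ≤ (y ^ 2 + c * y + 12) / (24 * y ^ 2 * (y + 1) ^ 2) := by positivity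
  have b0 : 0 ≤ y ^ 2 * ((y + 1) ^ 2 + c * (y + 1) + 12) / (24 * (y + 1) ^ 4 * (y + 2) ^ 2) := by
    positivity
  have d : 1 / (2 * y ^ 2) ≤ 1 / y := by
    apply one_div_le_one_div_of_le hy0; nlinarith
  have d0 : 0 ≤ 1 / (2 * y ^ 2) := by positivity
  have e0 : 0 ≤ 1 / y := by positivity
  have e : 4 / y = 4 * (1 / y) := by ring
  unfold bR
  rw [Real.norm_eq_abs, abs_le, e]
  constructor <;> linarith

open Filter Topology in
lemma tendsto_of_bound (g : ℝ → ℝ) (C : ℝ) (hg : ∀ y, 1 ≤ y → ‖g y‖ ≤ C / y) (x : ℝ) (hx : 0 < x) :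
    Tendsto (fun n : ℕ => g (x + n)) atTop (𝓝 0) := by
  have ht : Tendsto (fun n : ℕ => x + (n : ℝ)) atTop atTop :=
    tendsto_atTop_add_const_left _ _ tendsto_natCast_atTop_atTop
  refine squeeze_zero_norm' ?_ (ht.const_div_atTop C)
  filter_upwards [ht.eventually_ge_atTop 1] with n hn
  exact hg _ hn

lemma bR_lt_pS (y : ℝ) (hy : 0 < y) : bR 0 y < pS y := by
  have := pos_of_telescope (fun y => pS y - bR 0 y) (fun y hy => by
      have h1 := bR_low y hy
      have h2 := pS_succ y hy
      linarith) (fun y hy => by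
      simpa using (pS_tendsto y).sub (tendsto_of_bound (bR 0) 4
        (fun z hz => bR_bound 0 z le_rfl (by norm_num) hz) y hy)) y hy
  linarith

lemma pS_lt_bR (y : ℝ) (hy : 0 < y) : pS y < bR 4 y := by
  have := pos_of_telescope (fun y => bR 4 y - pS y) (fun y hy => by
      have h1 := bR_up y hy
      have h2 := pS_succ y hy
      linarith) (fun y hy => by
      simpa using (tendsto_of_bound (bR 4) 4
        (fun z hz => bR_bound 4 z (by norm_num) le_rfl hz) y hy).sub (pS_tendsto y)) y hy
  linarith

lemma f_step (y : ℝ) (hy : 0 < y) : (pS y ^ 2 + qS y) - (pS (y + 1) ^ 2 + qS (y + 1)) =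
    2 / y ^ 2 * (pS y - 1 / y - 1 / (2 * y ^ 2)) := by
  have h1 : pS (y + 1) = pS y - 1 / y ^ 2 := by linarith [pS_succ y hy]
  have h2 : qS (y + 1) = qS y - -2 / y ^ 3 := by linarith [qS_succ y hy]
  rw [h1, h2]
  field_simp
  ring

open Filter Topology in
lemma f_tendsto (y : ℝ) : Tendsto (fun n : ℕ => pS (y + n) ^ 2 + qS (y + n)) atTop (𝓝 0) := by
  simpa using ((pS_tendsto y).pow 2).add (qS_tendsto y)

lemma f_low (y : ℝ) (hy : 0 < y) : bF 0 y < pS y ^ 2 + qS y := by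
  have := pos_of_telescope (fun y => pS y ^ 2 + qS y - bF 0 y) (fun y hy => by
      have h1 := bR_eq 0 y hy
      have h2 := f_step y hy
      have h3 : 2 / y ^ 2 * (bR 0 y - 1 / y - 1 / (2 * y ^ 2)) <
          2 / y ^ 2 * (pS y - 1 / y - 1 / (2 * y ^ 2)) :=
        mul_lt_mul_of_pos_left (by linarith [bR_lt_pS y hy]) (by positivity)
      linarith) (fun y hy => by
      simpa using (f_tendsto y).sub (tendsto_of_bound (bF 0) 3
        (fun z hz => bF_bound 0 z le_rfl (by norm_num) hz) y hy)) y hy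
  linarith

lemma f_up (y : ℝ) (hy : 0 < y) : pS y ^ 2 + qS y < bF 4 y := by
  have := pos_of_telescope (fun y => bF 4 y - (pS y ^ 2 + qS y)) (fun y hy => by
      have h1 := bR_eq 4 y hy
      have h2 := f_step y hy
      have h3 : 2 / y ^ 2 * (pS y - 1 / y - 1 / (2 * y ^ 2)) <
          2 / y ^ 2 * (bR 4 y - 1 / y - 1 / (2 * y ^ 2)) :=
        mul_lt_mul_of_pos_left (by linarith [pS_lt_bR y hy]) (by positivity)
      linarith) (fun y hy => by
      simpa using (tendsto_of_bound (bF 4) 3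
        (fun z hz => bF_bound 4 z (by norm_num) le_rfl hz) y hy).sub (f_tendsto y)) y hy
  linarith

theorem stmt_3 (x : ℝ) (hx : x ∈ Set.Ioi (0 : ℝ)) :
    (x ^ 2 + 12) / (12 * x ^ 4 * (x + 1) ^ 2) <
      (deriv digamma x) ^ 2 + deriv (deriv digamma) x ∧
    (deriv digamma x) ^ 2 + deriv (deriv digamma) x <
      (x ^ 2 + 4 * x + 12) / (12 * x ^ 4 * (x + 1) ^ 2) := by
  have hx0 : 0 < x := hx
  rw [deriv2_digamma x hx0, deriv_digamma x hx0]
  have h1 := f_low x hx0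
  have h2 := f_up x hx0
  unfold bF at h1 h2
  rw [zero_mul, add_zero] at h1
  exact ⟨h1, h2⟩
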